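/- arXiv:2012.14698 — 2 statements merged into one kernel-verified Lean document; each statement's English description precedes it below -/
import Mathlib

section
/- Let f : {0,1}^n → ℝ_+ be a nonnegative submodular function and K ⊆ ℝ^q a convex cone containing the origin, with A ∈ ℝ^{q×m} and B ∈ ℝ^q. Then conv(S(f,K)) = {(x,z) ∈ ℝ^m × [0,1]^n : ∃ y ∈ ℝ such that y − f(∅) ≥ π^⊤ z for all π ∈ P_{f̃} and Ax + By ∈ K}, where f̃ := f − f(∅) and P_{f̃} := {π ∈ ℝ^n : Σ_{i∈V} π_i ≤ f(V) − f(∅) for all V ⊆ [n]}. That is, conv(S(f,K)) is given by the extended polymatroid inequalities for f − f(∅), the bounds 0 ≤ z ≤ 1, and the homogeneous conic constraint Ax + By ∈ K. -/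
/-!
Slice `z ∈ [0,1]^n` along its superlevel sets: `z` is a convex combination of the characteristic
vectors of the sets `{i | t < z i}`. The greedy vector `π`, built by adding elements in decreasing
order of `z`, lies in the extended polymatroid of `f - f ∅` and is tight at every one of these
sets, so `(z, f ∅ + π · z)` is a convex combination of points `(χ_V, f V)` of the graph of `f`.
If `y` satisfies the polymatroid inequalities, then `f ∅ + π · z ≤ y`, and it remains to lift the
combination to the cone: when `(x, y) ∈ C`, so is every `(t x, t y)` with `0 ≤ t`, and
`t = 1 + (f V - (f ∅ + π · z)) / y` makes `t y ≥ f V` and averages to `1`. If `y = 0`, only sets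
with `f V = 0` can take part and `t = 1` suffices.
-/

open Finset
open scoped Pointwise

section Polymatroid

/-- Submodularity of a function on a lattice, in particular of a set function on `Finset ι`. -/
def IsSubmodular {L M : Type*} [Lattice L] [Add M] [LE M] (f : L → M) : Prop :=
  ∀ a b, f (a ⊔ b) + f (a ⊓ b) ≤ f a + f b

/-- The extended polymatroid `P_g` of a set function `g`. No sign condition is put on its
elements. -/
def extendedPolymatroid {ι M : Type*} [AddCommMonoid M] [LE M] (g : Finset ι → M) :
    Set (ι → M) :=
  {π | ∀ V, ∑ i ∈ V, π i ≤ g V}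

variable {ι G : Type*} [DecidableEq ι] [AddCommGroup G] [PartialOrder G] [IsOrderedAddMonoid G]
  {f : Finset ι → G}

theorem IsSubmodular.insert_sub_le (hf : IsSubmodular f) {a : ι} {s S : Finset ι} (ha : a ∉ s)
    (haS : a ∈ S) (hS : S ⊆ insert a s) :
    f (insert a s) - f s ≤ f S - f (S.erase a) := by
  have hsup : S ⊔ s = insert a s := by grind
  have hinf : S ⊓ s = S.erase a := by grind
  have h := hf S s
  rw [hsup, hinf] at h
  rwa [sub_le_sub_iff]

theorem IsSubmodular.sum_update_le_sub_empty (hf : IsSubmodular f) {a : ι} {s : Finset ι}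
    (ha : a ∉ s) {π : ι → G} (hπ : ∀ S ⊆ s, ∑ i ∈ S, π i ≤ f S - f ∅) {S : Finset ι}
    (hS : S ⊆ insert a s) :
    ∑ i ∈ S, Function.update π a (f (insert a s) - f s) i ≤ f S - f ∅ := by
  by_cases haS : a ∈ S
  · rw [sum_update_of_mem haS, sdiff_singleton_eq_erase]
    calc f (insert a s) - f s + ∑ i ∈ S.erase a, π i
        ≤ f S - f (S.erase a) + (f (S.erase a) - f ∅) :=
          add_le_add (hf.insert_sub_le ha haS hS) (hπ _ (subset_insert_iff.mp hS))
      _ = f S - f ∅ := sub_add_sub_cancel ..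
  · rw [sum_update_of_notMem haS]
    exact hπ S ((subset_insert_iff_of_notMem haS).mp hS)

theorem IsSubmodular.exists_greedy_on {α : Type*} [LinearOrder α]
    (hf : IsSubmodular f) (z : ι → α) (s : Finset ι) :
    ∃ π : ι → G, (∀ S ⊆ s, ∑ i ∈ S, π i ≤ f S - f ∅) ∧
      ∀ t, ∑ i ∈ s with t < z i, π i = f {i ∈ s | t < z i} - f ∅ := by
  induction s using Finset.induction_on_min_value z with
  | empty => exact ⟨0, by simp +contextual, by simp⟩
  | insert a s ha hmin ih =>
    obtain ⟨π, hle, htight⟩ := ih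
    refine ⟨Function.update π a (f (insert a s) - f s),
      fun S hS => hf.sum_update_le_sub_empty ha hle hS, fun t => ?_⟩
    by_cases hta : t < z a
    · have hs : {i ∈ s | t < z i} = s := filter_true_of_mem fun i hi => hta.trans_le (hmin i hi)
      have htight_s : ∑ i ∈ s, π i = f s - f ∅ := by simpa only [hs] using htight t
      rw [filter_insert, if_pos hta, hs, sum_insert ha, Function.update_self,
        sum_update_of_notMem ha, htight_s, sub_add_sub_cancel]
    · have ha' : a ∉ {i ∈ s | t < z i} := fun h => ha (mem_filter.mp h).1
      rw [filter_insert, if_neg hta, sum_update_of_notMem ha', htight t]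

theorem IsSubmodular.exists_mem_extendedPolymatroid_forall_sum_eq [Fintype ι]
    {α : Type*} [LinearOrder α] (hf : IsSubmodular f) (z : ι → α) :
    ∃ π ∈ extendedPolymatroid (fun V => f V - f ∅),
      ∀ t, ∑ i with t < z i, π i = f {i | t < z i} - f ∅ := by
  obtain ⟨π, hle, htight⟩ := hf.exists_greedy_on z univ
  exact ⟨π, fun V => hle V (subset_univ V), htight⟩

end Polymatroid

section CharVec

/-- The characteristic vector of `V`, a vertex of the cube `{0,1}^ι`. -/
def charVec (𝕜 : Type*) {ι : Type*} [Zero 𝕜] [One 𝕜] [DecidableEq ι] (V : Finset ι) : ι → 𝕜 :=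
  fun i => if i ∈ V then 1 else 0

theorem dotProduct_charVec {𝕜 ι : Type*} [NonAssocSemiring 𝕜] [Fintype ι] [DecidableEq ι]
    (π : ι → 𝕜) (V : Finset ι) : π ⬝ᵥ charVec 𝕜 V = ∑ i ∈ V, π i := by
  simp [dotProduct, charVec]

/-- The graph of `f` over the vertices `χ_V` of the cube. The lower boundary of its convex hull is
the Lovász extension of `f` when `f` is submodular. -/
def setFunctionGraph {𝕜 ι : Type*} [Zero 𝕜] [One 𝕜] [DecidableEq ι] (f : Finset ι → 𝕜) :
    Set ((ι → 𝕜) × 𝕜) :=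
  Set.range fun V => (charVec 𝕜 V, f V)

end CharVec

section ConvexHull

theorem map_mem_convexHull {𝕜 E F : Type*} [Field 𝕜] [LinearOrder 𝕜] [AddCommGroup E]
    [Module 𝕜 E] [AddCommGroup F] [Module 𝕜 F] {φ : E →ᵃ[𝕜] F} {T : Set E} {U : Set F}
    (hφ : Set.MapsTo φ T U) {p : E} (hp : p ∈ convexHull 𝕜 T) : φ p ∈ convexHull 𝕜 U :=
  convexHull_mono hφ.image_subset (φ.image_convexHull T ▸ Set.mem_image_of_mem φ hp)

variable {𝕜 : Type*} [Field 𝕜] [LinearOrder 𝕜] [IsStrictOrderedRing 𝕜]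

theorem mem_convexHull_inter_ker_of_nonneg {E : Type*} [AddCommGroup E] [Module 𝕜 E]
    {T : Set E} {l : E →ₗ[𝕜] 𝕜} (hT : ∀ p ∈ T, 0 ≤ l p) {p : E} (hp : p ∈ convexHull 𝕜 T)
    (hlp : l p = 0) : p ∈ convexHull 𝕜 (T ∩ {q | l q = 0}) := by
  let D : Set E := {q | 0 ≤ l q ∧ (l q = 0 → q ∈ convexHull 𝕜 (T ∩ {q | l q = 0}))}
  have hTD : T ⊆ D := fun q hq => ⟨hT q hq, fun hlq => subset_convexHull 𝕜 _ ⟨hq, hlq⟩⟩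
  have hD : Convex 𝕜 D := by
    rw [convex_iff_forall_pos]
    rintro q ⟨hq, hq₀⟩ r ⟨hr, hr₀⟩ a b ha hb hab
    have hl : l (a • q + b • r) = a * l q + b * l r := by simp
    refine ⟨hl ▸ by positivity, fun h₀ => ?_⟩
    rw [hl, add_eq_zero_iff_of_nonneg (by positivity) (by positivity)] at h₀
    exact convex_convexHull 𝕜 _ (hq₀ ((mul_eq_zero_iff_left ha.ne').mp h₀.1))
      (hr₀ ((mul_eq_zero_iff_left hb.ne').mp h₀.2)) ha.le hb.le hab
  exact (convexHull_min hTD hD hp).2 hlp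

variable {ι : Type*} [Fintype ι] [DecidableEq ι]

/-- The characteristic vectors of the strict superlevel sets of `z` at nonnegative levels. -/
def superlevelCharVecs (z : ι → 𝕜) : Set (ι → 𝕜) :=
  {v | ∃ t, 0 ≤ t ∧ v = charVec 𝕜 {i | t < z i}}

theorem superlevelCharVecs_truncate_subset (z : ι → 𝕜) {c : 𝕜} (hc : 0 ≤ c) :
    superlevelCharVecs (fun i => max (z i - c) 0) ⊆ superlevelCharVecs z := by
  rintro _ ⟨t, ht, rfl⟩
  refine ⟨t + c, add_nonneg ht hc, ?_⟩
  simp only [lt_max_iff, ht.not_gt, or_false, lt_sub_iff_add_lt]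

theorem eq_smul_charVec_support_add_truncate {z : ι → 𝕜} (hz : ∀ i, 0 ≤ z i) {c : 𝕜}
    (hc : 0 ≤ c) (hmin : ∀ i, 0 < z i → c ≤ z i) :
    z = c • charVec 𝕜 {i | 0 < z i} + fun i => max (z i - c) 0 := by
  ext i
  rcases (hz i).eq_or_lt with hi | hi
  · simp [charVec, ← hi, hc]
  · simp [charVec, hi, hmin i hi]

-- Subtracting the least positive value of `z` on its support shrinks the support, so one can peel
-- off layers inductively; `M` is the total weight still to be distributed.
theorem mem_smul_convexHull_superlevelCharVecs (z : ι → 𝕜) (hz : ∀ i, 0 ≤ z i) {M : 𝕜}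
    (hM : 0 ≤ M) (hzM : ∀ i, z i ≤ M) :
    z ∈ M • convexHull 𝕜 (superlevelCharVecs z) := by
  induction hs : ({i | 0 < z i} : Finset ι) using Finset.strongInduction generalizing z M with
  | H s ih =>
  have hsupp : charVec 𝕜 s ∈ convexHull 𝕜 (superlevelCharVecs z) :=
    subset_convexHull 𝕜 _ ⟨0, le_rfl, by rw [hs]⟩
  rcases s.eq_empty_or_nonempty with rfl | hne
  · have hz₀ : z = M • charVec 𝕜 ∅ := by
      ext i
      have : ¬ 0 < z i := filter_eq_empty_iff.mp hs (mem_univ i)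
      simpa [charVec] using le_antisymm (not_lt.mp this) (hz i)
    exact hz₀ ▸ Set.smul_mem_smul_set (hz₀ ▸ hsupp)
  · obtain ⟨a, has, hmin⟩ := s.exists_min_image z hne
    have ha : 0 < z a := by simpa [← hs] using has
    have hmin' : ∀ i, 0 < z i → z a ≤ z i := fun i hi => hmin i (by simpa [← hs] using hi)
    have hsub : ({i | 0 < max (z i - z a) 0} : Finset ι) ⊂ s := by
      refine (ssubset_iff_of_subset fun i hi => ?_).mpr ⟨a, has, by simp⟩
      have hi' : z a < z i := by simpa using hi
      simpa [← hs] using ha.trans hi'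
    have hrest : (fun i => max (z i - z a) 0) ∈
        (M - z a) • convexHull 𝕜 (superlevelCharVecs z) :=
      Set.smul_set_mono (convexHull_mono (superlevelCharVecs_truncate_subset z ha.le))
        (ih _ hsub _ (fun i => le_max_right _ _) (sub_nonneg.mpr (hzM a))
          (fun i => max_le (sub_le_sub_right (hzM i) _) (sub_nonneg.mpr (hzM a))) rfl)
    have hsum := Set.add_mem_add (Set.smul_mem_smul_set (a := z a) hsupp) hrest
    rwa [← (convex_convexHull 𝕜 _).add_smul ha.le (sub_nonneg.mpr (hzM a)), add_sub_cancel,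
      ← hs, ← eq_smul_charVec_support_add_truncate hz ha.le hmin'] at hsum

theorem mem_convexHull_superlevelCharVecs {z : ι → 𝕜} (hz : ∀ i, z i ∈ Set.Icc 0 1) :
    z ∈ convexHull 𝕜 (superlevelCharVecs z) := by
  simpa only [one_smul] using mem_smul_convexHull_superlevelCharVecs z (fun i => (hz i).1)
    zero_le_one (fun i => (hz i).2)

theorem IsSubmodular.exists_mem_convexHull_setFunctionGraph {f : Finset ι → 𝕜}
    (hf : IsSubmodular f) {z : ι → 𝕜} (hz : ∀ i, z i ∈ Set.Icc 0 1) :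
    ∃ π ∈ extendedPolymatroid (fun V => f V - f ∅),
      (z, f ∅ + π ⬝ᵥ z) ∈ convexHull 𝕜 (setFunctionGraph f) := by
  obtain ⟨π, hπ, htight⟩ := hf.exists_mem_extendedPolymatroid_forall_sum_eq z
  let φ : (ι → 𝕜) →ᵃ[𝕜] (ι → 𝕜) × 𝕜 :=
    (AffineMap.id 𝕜 _).prod
      (AffineMap.const 𝕜 _ (f ∅) + (dotProductBilin 𝕜 𝕜 π).toAffineMap)
  have hφ : Set.MapsTo φ (superlevelCharVecs z) (setFunctionGraph f) := by
    rintro _ ⟨t, -, rfl⟩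
    refine ⟨univ.filter (t < z ·), Prod.ext rfl ?_⟩
    change f _ = f ∅ + π ⬝ᵥ charVec 𝕜 _
    rw [dotProduct_charVec, htight, add_sub_cancel]
  exact ⟨π, hπ, map_mem_convexHull hφ (mem_convexHull_superlevelCharVecs hz)⟩

end ConvexHull

section MixedBinarySet

variable {𝕜 ι E : Type*} [Field 𝕜] [LinearOrder 𝕜]

/-- The mixed-binary set `S(f, K)`, with the conic constraint `A x + y B ∈ K` recorded as the set
`C` of all pairs `(x, y)` that satisfy it. -/
def mixedBinarySet [DecidableEq ι] (f : Finset ι → 𝕜) (C : Set (E × 𝕜)) : Set (E × (ι → 𝕜)) :=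
  {w | ∃ V, w.2 = charVec 𝕜 V ∧ ∃ y, f V ≤ y ∧ (w.1, y) ∈ C}

/-- The continuous relaxation of `mixedBinarySet f C` by the extended polymatroid inequalities of
`f - f ∅` and the bounds `0 ≤ z ≤ 1`. -/
def polymatroidRelaxation [Fintype ι] (f : Finset ι → 𝕜) (C : Set (E × 𝕜)) :
    Set (E × (ι → 𝕜)) :=
  {w | (∀ i, w.2 i ∈ Set.Icc 0 1) ∧ ∃ y,
    (∀ π ∈ extendedPolymatroid (fun V => f V - f ∅), π ⬝ᵥ w.2 ≤ y - f ∅) ∧ (w.1, y) ∈ C}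

variable [IsStrictOrderedRing 𝕜]

theorem mixedBinarySet_subset_polymatroidRelaxation [Fintype ι] [DecidableEq ι]
    (f : Finset ι → 𝕜) (C : Set (E × 𝕜)) :
    mixedBinarySet f C ⊆ polymatroidRelaxation f C := by
  rintro ⟨x, _⟩ ⟨V, rfl, y, hVy, hC⟩
  refine ⟨fun i => ?_, y, fun π hπ => ?_, hC⟩
  · by_cases hi : i ∈ V <;> simp [charVec, hi]
  · exact dotProduct_charVec π V ▸ (hπ V).trans (sub_le_sub_right hVy _)

variable [AddCommGroup E] [Module 𝕜 E]

theorem convex_polymatroidRelaxation [Fintype ι] (f : Finset ι → 𝕜) {C : Set (E × 𝕜)}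
    (hC : Convex 𝕜 C) : Convex 𝕜 (polymatroidRelaxation f C) := by
  rintro ⟨x, z⟩ ⟨hz, y, hy, hxy⟩ ⟨x', z'⟩ ⟨hz', y', hy', hxy'⟩ a b ha hb hab
  refine ⟨fun i => convex_Icc 0 1 (hz i) (hz' i) ha hb hab, a * y + b * y',
    fun π hπ => ?_, hC hxy hxy' ha hb hab⟩
  calc π ⬝ᵥ (a • z + b • z') = a * (π ⬝ᵥ z) + b * (π ⬝ᵥ z') := by
        simp only [dotProduct_add, dotProduct_smul, smul_eq_mul]
    _ ≤ a * (y - f ∅) + b * (y' - f ∅) := by gcongr; exacts [hy π hπ, hy' π hπ]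
    _ = a * y + b * y' - f ∅ := by linear_combination -f ∅ * hab

variable [DecidableEq ι] {f : Finset ι → 𝕜} {x : E} {y r : 𝕜} {z : ι → 𝕜}

theorem mem_convexHull_mixedBinarySet_of_zero {C : Set (E × 𝕜)} (hf : ∀ V, 0 ≤ f V)
    (hz : (z, 0) ∈ convexHull 𝕜 (setFunctionGraph f)) (hx : (x, 0) ∈ C) :
    (x, z) ∈ convexHull 𝕜 (mixedBinarySet f C) := by
  have hgraph : ∀ p ∈ setFunctionGraph f, 0 ≤ LinearMap.snd 𝕜 (ι → 𝕜) 𝕜 p :=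
    Set.forall_mem_range.mpr hf
  let φ : (ι → 𝕜) × 𝕜 →ᵃ[𝕜] E × (ι → 𝕜) :=
    (AffineMap.const 𝕜 _ x).prod (LinearMap.fst 𝕜 (ι → 𝕜) 𝕜).toAffineMap
  refine map_mem_convexHull (φ := φ) ?_ (mem_convexHull_inter_ker_of_nonneg hgraph hz rfl)
  rintro _ ⟨⟨V, rfl⟩, hV⟩
  exact ⟨V, rfl, 0, le_of_eq hV, hx⟩

theorem mem_convexHull_mixedBinarySet_of_pos {C : PointedCone 𝕜 (E × 𝕜)} (hf : ∀ V, 0 ≤ f V)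
    (hz : (z, r) ∈ convexHull 𝕜 (setFunctionGraph f)) (hry : r ≤ y) (hy : 0 < y)
    (hxy : (x, y) ∈ C) : (x, z) ∈ convexHull 𝕜 (mixedBinarySet f (C : Set (E × 𝕜))) := by
  let φ : (ι → 𝕜) × 𝕜 →ᵃ[𝕜] E × (ι → 𝕜) :=
    AffineMap.prod
      (AffineMap.const 𝕜 _ ((1 - r / y) • x) +
        ((LinearMap.snd 𝕜 (ι → 𝕜) 𝕜).smulRight (y⁻¹ • x)).toAffineMap)
      (LinearMap.fst 𝕜 (ι → 𝕜) 𝕜).toAffineMap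
  have hφ_apply : ∀ p, φ p = ((1 + (p.2 - r) / y) • x, p.1) := fun p => by
    refine Prod.ext ?_ rfl
    change (1 - r / y) • x + p.2 • y⁻¹ • x = (1 + (p.2 - r) / y) • x
    module
  have hφ : Set.MapsTo φ (setFunctionGraph f) (mixedBinarySet f (C : Set (E × 𝕜))) := by
    rintro _ ⟨V, rfl⟩
    have hty : (1 + (f V - r) / y) * y = f V + (y - r) := by field_simp; ring
    have hfty : f V ≤ (1 + (f V - r) / y) * y :=
      hty ▸ le_add_of_nonneg_right (sub_nonneg.mpr hry)
    have ht : 0 ≤ 1 + (f V - r) / y := nonneg_of_mul_nonneg_left ((hf V).trans hfty) hy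
    rw [hφ_apply]
    exact ⟨V, rfl, _, hfty, C.smul_mem ht hxy⟩
  simpa only [hφ_apply, sub_self, zero_div, add_zero, one_smul] using map_mem_convexHull hφ hz

theorem mem_convexHull_mixedBinarySet {C : PointedCone 𝕜 (E × 𝕜)} (hf : ∀ V, 0 ≤ f V)
    (hz : (z, r) ∈ convexHull 𝕜 (setFunctionGraph f)) (hry : r ≤ y) (hxy : (x, y) ∈ C) :
    (x, z) ∈ convexHull 𝕜 (mixedBinarySet f (C : Set (E × 𝕜))) := by
  have hr : 0 ≤ r := convexHull_min (t := {p : (ι → 𝕜) × 𝕜 | 0 ≤ p.2})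
    (Set.range_subset_iff.mpr hf)
    (convex_halfSpace_ge (LinearMap.snd 𝕜 (ι → 𝕜) 𝕜).isLinear 0) hz
  rcases (hr.trans hry).eq_or_lt with rfl | hy
  · obtain rfl : r = 0 := le_antisymm hry hr
    exact mem_convexHull_mixedBinarySet_of_zero hf hz hxy
  · exact mem_convexHull_mixedBinarySet_of_pos hf hz hry hy hxy

theorem conv_S_submodular_general [Fintype ι] (hf : ∀ V, 0 ≤ f V) (hsub : IsSubmodular f)
    (C : PointedCone 𝕜 (E × 𝕜)) :
    convexHull 𝕜 (mixedBinarySet f (C : Set (E × 𝕜))) = polymatroidRelaxation f C := by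
  refine Set.Subset.antisymm (convexHull_min (mixedBinarySet_subset_polymatroidRelaxation f _)
    (convex_polymatroidRelaxation f C.convex)) ?_
  rintro ⟨x, z⟩ ⟨hz, y, hy, hxy⟩
  obtain ⟨π, hπ, hgraph⟩ := hsub.exists_mem_convexHull_setFunctionGraph hz
  exact mem_convexHull_mixedBinarySet hf hgraph (le_sub_iff_add_le'.mp (hy π hπ)) hxy

end MixedBinarySet

/-- Corollary 3: for a nonnegative submodular `f : {0,1}^n → ℝ_+` and a convex cone `K`
containing the origin, `conv(S(f,K))` is given by the extended polymatroid inequalities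
for `f − f(∅)`, the bounds `0 ≤ z ≤ 1`, and the conic constraint `Ax + By ∈ K`.
Binary vectors `z` are identified with characteristic vectors of subsets `V ⊆ [n]`. -/
theorem conv_S_submodular (n m q : ℕ) (f : Finset (Fin n) → ℝ)
    (hf : ∀ V : Finset (Fin n), 0 ≤ f V)
    (hsub : ∀ S₁ S₂ : Finset (Fin n), f (S₁ ∪ S₂) + f (S₁ ∩ S₂) ≤ f S₁ + f S₂)
    (K : Set (Fin q → ℝ)) (hK0 : (0 : Fin q → ℝ) ∈ K)
    (hKadd : ∀ a ∈ K, ∀ b ∈ K, a + b ∈ K)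
    (hKsmul : ∀ c : ℝ, 0 ≤ c → ∀ a ∈ K, c • a ∈ K)
    (A : Matrix (Fin q) (Fin m) ℝ) (B : Fin q → ℝ) :
    convexHull ℝ {w : (Fin m → ℝ) × (Fin n → ℝ) |
      ∃ V : Finset (Fin n), (∀ i, w.2 i = if i ∈ V then (1:ℝ) else 0) ∧
        ∃ y : ℝ, f V ≤ y ∧ A.mulVec w.1 + y • B ∈ K}
    = {w : (Fin m → ℝ) × (Fin n → ℝ) | (∀ i, w.2 i ∈ Set.Icc (0:ℝ) 1) ∧
        ∃ y : ℝ,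
          (∀ π : Fin n → ℝ, (∀ V : Finset (Fin n), ∑ i ∈ V, π i ≤ f V - f ∅) →
            ∑ i, π i * w.2 i ≤ y - f ∅) ∧
          A.mulVec w.1 + y • B ∈ K} := by
  let K' : PointedCone ℝ (Fin q → ℝ) :=
    { carrier := K
      add_mem' := fun {a b} ha hb => hKadd a ha b hb
      zero_mem' := hK0
      smul_mem' := fun c a ha => hKsmul c c.2 a ha }
  let L : (Fin m → ℝ) × ℝ →ₗ[ℝ] Fin q → ℝ :=
    A.mulVecLin.coprod (LinearMap.toSpanSingleton ℝ _ B)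
  simp only [← funext_iff]
  exact conv_S_submodular_general hf hsub (K'.comap L)
end

section
/- Let σ ∈ ℝ, c ∈ ℝ^n, d ∈ ℝ^{m−1}_+ with σ + Σ_{i∈[n]} c_i z_i ≥ 0 for all z ∈ {0,1}^n, and define f(z) := √(σ + Σ_{i∈[n]} c_i z_i) and H := {(x,z) ∈ ℝ^m_+ × {0,1}^n : √(σ + Σ_{i∈[n]} c_i z_i + Σ_{j∈[m−1]} d_j x_j²) ≤ x_m}. Then conv(H) = {(x,z) ∈ ℝ^m_+ × [0,1]^n : ∃ y ∈ ℝ_+ such that (y,z) ∈ conv(Epi(f)) and √(y² + Σ_{i∈[m−1]} d_i x_i²) ≤ x_m}. -/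
/-! The constraints `√(y² + ∑ dⱼ xⱼ²) ≤ x_m` and `x ≥ 0` cut out a convex cone `K` of pairs
`(y, x)` that is closed under decreasing `y ≥ 0`, and `H` consists of the `(x, z)` with `z` binary
and `(f z, x) ∈ K`. Suppose `(y, x) ∈ K` and `(y, z)` is a convex combination of points `(tₖ, zₖ)`
of the epigraph of `f`. If `y > 0`, then `(x, z)` is the same combination of the points
`((tₖ / y) x, zₖ)`, which lie in `H` because `K` is a cone. If `y = 0`, then every `tₖ` of positive
weight vanishes, so that already `(x, zₖ) ∈ H`. -/

section ConicLift

variable {𝕜 E F : Type*} [Field 𝕜] [LinearOrder 𝕜] [IsStrictOrderedRing 𝕜]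
  [AddCommGroup E] [Module 𝕜 E] [AddCommGroup F] [Module 𝕜 F]

theorem mem_convexHull_inter_of_apply_eq_zero (φ : E →ₗ[𝕜] 𝕜) {s : Set E}
    (hφ : ∀ x ∈ s, 0 ≤ φ x) {x : E} (hx : x ∈ convexHull 𝕜 s) (hx0 : φ x = 0) :
    x ∈ convexHull 𝕜 (s ∩ {x | φ x = 0}) := by
  suffices h : convexHull 𝕜 s ⊆
      {x | 0 ≤ φ x ∧ (φ x = 0 → x ∈ convexHull 𝕜 (s ∩ {x | φ x = 0}))} from (h hx).2 hx0
  refine convexHull_min (fun x hx ↦ ⟨hφ x hx, fun h ↦ subset_convexHull 𝕜 _ ⟨hx, h⟩⟩) ?_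
  refine convex_iff_forall_pos.2 fun u ⟨hu, hu'⟩ v ⟨hv, hv'⟩ a b ha hb hab ↦ ?_
  have hau := mul_nonneg ha.le hu
  have hbv := mul_nonneg hb.le hv
  simp only [Set.mem_ofPred_eq, map_add, map_smul, smul_eq_mul]
  refine ⟨add_nonneg hau hbv, fun h ↦ ?_⟩
  obtain ⟨hau0, hbv0⟩ := (add_eq_zero_iff_of_nonneg hau hbv).1 h
  exact convex_convexHull 𝕜 _ (hu' ((mul_eq_zero_iff_left ha.ne').1 hau0))
    (hv' ((mul_eq_zero_iff_left hb.ne').1 hbv0)) ha.le hb.le hab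

/-- The epigraph of `f` over `S`, with the value in the first coordinate; it is `Epi(f)` when
`S = {0,1}ⁿ`. -/
def epigraphOn (S : Set F) (f : F → 𝕜) : Set (𝕜 × F) :=
  {p | p.2 ∈ S ∧ f p.2 ≤ p.1}

/-- The points `(x, z)` over `S` whose lift `(f z, x)` lies in the cone `K`; the set `H` is of this
form. -/
def conicLift (K : PointedCone 𝕜 (𝕜 × E)) (S : Set F) (f : F → 𝕜) : Set (E × F) :=
  {w | w.2 ∈ S ∧ (f w.2, w.1) ∈ K}

variable {K : PointedCone 𝕜 (𝕜 × E)} {S : Set F} {f : F → 𝕜}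

theorem fst_nonneg_of_mem_convexHull_epigraphOn (hf : ∀ z ∈ S, 0 ≤ f z) {p : 𝕜 × F}
    (hp : p ∈ convexHull 𝕜 (epigraphOn S f)) : 0 ≤ p.1 :=
  convexHull_min (fun q hq ↦ (hf q.2 hq.1).trans hq.2)
    (convex_halfSpace_ge (LinearMap.fst 𝕜 𝕜 F).isLinear 0) hp

omit [IsStrictOrderedRing 𝕜] in
theorem snd_mem_convexHull_of_mem_convexHull_epigraphOn {p : 𝕜 × F}
    (hp : p ∈ convexHull 𝕜 (epigraphOn S f)) : p.2 ∈ convexHull 𝕜 S :=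
  convexHull_min (t := LinearMap.snd 𝕜 𝕜 F ⁻¹' convexHull 𝕜 S)
    (fun _ hq ↦ subset_convexHull 𝕜 _ hq.1)
    ((convex_convexHull 𝕜 S).linear_preimage (LinearMap.snd 𝕜 𝕜 F)) hp

theorem convex_setOf_exists_mem_and_mem (K : PointedCone 𝕜 (𝕜 × E)) {A : Set (𝕜 × F)}
    (hA : Convex 𝕜 A) : Convex 𝕜 {w : E × F | ∃ y, (y, w.2) ∈ A ∧ (y, w.1) ∈ K} := by
  rintro ⟨x, z⟩ ⟨y, hz, hx⟩ ⟨x', z'⟩ ⟨y', hz', hx'⟩ a b ha hb hab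
  exact ⟨a • y + b • y', hA hz hz' ha hb hab, K.convex hx hx' ha hb hab⟩

theorem mem_convexHull_conicLift_of_pos
    (hK : ∀ ⦃s t x⦄, 0 ≤ s → s ≤ t → (t, x) ∈ K → (s, x) ∈ K) (hf : ∀ z ∈ S, 0 ≤ f z)
    {y : 𝕜} {x : E} {z : F} (hy : 0 < y) (hx : (y, x) ∈ K)
    (hz : (y, z) ∈ convexHull 𝕜 (epigraphOn S f)) :
    (x, z) ∈ convexHull 𝕜 (conicLift K S f) := by
  let L : 𝕜 × F →ₗ[𝕜] E × F := ((y⁻¹ • LinearMap.id).smulRight x).prodMap LinearMap.id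
  have hL : Set.MapsTo L (epigraphOn S f) (conicLift K S f) := by
    rintro ⟨t, w⟩ ⟨hw, ht⟩
    have ht0 : 0 ≤ y⁻¹ * t := mul_nonneg (inv_nonneg.2 hy.le) ((hf w hw).trans ht)
    have hscale : (y⁻¹ * t) • (y, x) = (t, (y⁻¹ * t) • x) := by
      rw [Prod.smul_mk, smul_eq_mul, mul_right_comm, inv_mul_cancel₀ hy.ne', one_mul]
    have htK : (t, (y⁻¹ * t) • x) ∈ K := hscale ▸ K.smul_mem ht0 hx
    exact ⟨hw, hK (hf w hw) ht htK⟩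
  have hLyz : L (y, z) = (x, z) := by simp [L, hy.ne']
  rw [← hLyz]
  exact convexHull_mono hL.image_subset (L.image_convexHull _ ▸ Set.mem_image_of_mem L hz)

theorem mem_convexHull_conicLift_of_zero (hf : ∀ z ∈ S, 0 ≤ f z) {x : E} {z : F}
    (hx : (0, x) ∈ K) (hz : (0, z) ∈ convexHull 𝕜 (epigraphOn S f)) :
    (x, z) ∈ convexHull 𝕜 (conicLift K S f) := by
  have hface := mem_convexHull_inter_of_apply_eq_zero (LinearMap.fst 𝕜 𝕜 F)
    (fun p hp ↦ (hf p.2 hp.1).trans hp.2) hz rfl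
  let L : 𝕜 × F →ᵃ[𝕜] E × F := (AffineMap.const 𝕜 _ x).prod AffineMap.snd
  have hL : Set.MapsTo L (epigraphOn S f ∩ {p | LinearMap.fst 𝕜 𝕜 F p = 0})
      (conicLift K S f) := by
    rintro ⟨t, w⟩ ⟨⟨hw, ht⟩, rfl : t = 0⟩
    have hfw : f w = 0 := ht.antisymm (hf w hw)
    have hxK : (f w, x) ∈ K := by rwa [hfw]
    exact ⟨hw, hxK⟩
  exact convexHull_mono hL.image_subset (L.image_convexHull _ ▸ Set.mem_image_of_mem L hface)

theorem convexHull_conicLift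
    (hK : ∀ ⦃s t x⦄, 0 ≤ s → s ≤ t → (t, x) ∈ K → (s, x) ∈ K) (hf : ∀ z ∈ S, 0 ≤ f z) :
    convexHull 𝕜 (conicLift K S f) =
      {w | ∃ y, (y, w.2) ∈ convexHull 𝕜 (epigraphOn S f) ∧ (y, w.1) ∈ K} := by
  apply Set.Subset.antisymm
  · refine convexHull_min ?_ (convex_setOf_exists_mem_and_mem K (convex_convexHull 𝕜 _))
    exact fun w ⟨hw, hwK⟩ ↦ ⟨f w.2, subset_convexHull 𝕜 _ ⟨hw, le_rfl⟩, hwK⟩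
  · rintro ⟨x, z⟩ ⟨y, hz, hx⟩
    rcases (fst_nonneg_of_mem_convexHull_epigraphOn hf hz).eq_or_lt with rfl | hy
    · exact mem_convexHull_conicLift_of_zero hf hx hz
    · exact mem_convexHull_conicLift_of_pos hK hf hy hx hz

end ConicLift

section SecondOrderCone

variable {E F : Type*} [AddCommGroup E] [Module ℝ E]

theorem sqrt_add_sq_add_add_sq_le (a b c d : ℝ) :
    √((a + b) ^ 2 + (c + d) ^ 2) ≤ √(a ^ 2 + c ^ 2) + √(b ^ 2 + d ^ 2) := by
  simpa [EuclideanSpace.norm_eq] using norm_add_le !₂[a, c] !₂[b, d]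

/-- The pairs `(y, x)` with `x` in the cone `C` and `√(y² + p(x)²) ≤ ℓ x`: the constraint that ties
the lifting variable `y` to the continuous variables `x`. -/
def secondOrderCone (C : PointedCone ℝ E) (p : Seminorm ℝ E) (ℓ : E →ₗ[ℝ] ℝ) :
    PointedCone ℝ (ℝ × E) where
  carrier := {v | v.2 ∈ C ∧ √(v.1 ^ 2 + p v.2 ^ 2) ≤ ℓ v.2}
  zero_mem' := by simp
  add_mem' := by
    rintro ⟨y, x⟩ ⟨y', x'⟩ ⟨hx, h⟩ ⟨hx', h'⟩
    refine ⟨C.add_mem hx hx', ?_⟩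
    calc √((y + y') ^ 2 + p (x + x') ^ 2)
      _ ≤ √((y + y') ^ 2 + (p x + p x') ^ 2) := by gcongr; exact map_add_le_add p x x'
      _ ≤ √(y ^ 2 + p x ^ 2) + √(y' ^ 2 + p x' ^ 2) := sqrt_add_sq_add_add_sq_le ..
      _ ≤ ℓ x + ℓ x' := add_le_add h h'
      _ = ℓ (x + x') := (map_add ℓ x x').symm
  smul_mem' := by
    rintro ⟨r, hr⟩ ⟨y, x⟩ ⟨hx, h⟩
    refine ⟨C.smul_mem hr hx, ?_⟩
    calc √((r * y) ^ 2 + p (r • x) ^ 2)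
      _ = √(r ^ 2 * (y ^ 2 + p x ^ 2)) := by
        rw [map_smul_eq_mul, Real.norm_of_nonneg hr, mul_pow, mul_pow, mul_add]
      _ = r * √(y ^ 2 + p x ^ 2) := by rw [Real.sqrt_mul (sq_nonneg r), Real.sqrt_sq hr]
      _ ≤ r * ℓ x := mul_le_mul_of_nonneg_left h hr
      _ = ℓ (r • x) := (map_smul ℓ r x).symm

theorem mem_secondOrderCone_of_le {C : PointedCone ℝ E} {p : Seminorm ℝ E} {ℓ : E →ₗ[ℝ] ℝ}
    ⦃s t : ℝ⦄ ⦃x : E⦄ (hs : 0 ≤ s) (hst : s ≤ t) (h : (t, x) ∈ secondOrderCone C p ℓ) :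
    (s, x) ∈ secondOrderCone C p ℓ :=
  ⟨h.1, (Real.sqrt_le_sqrt (by gcongr)).trans h.2⟩

theorem conicLift_secondOrderCone_sqrt (C : PointedCone ℝ E) (p : Seminorm ℝ E)
    (ℓ : E →ₗ[ℝ] ℝ) {S : Set F} {g : F → ℝ} (hg : ∀ z ∈ S, 0 ≤ g z) :
    conicLift (secondOrderCone C p ℓ) S (fun z ↦ √(g z)) =
      {w | w.1 ∈ C ∧ w.2 ∈ S ∧ √(g w.2 + p w.1 ^ 2) ≤ ℓ w.1} := by
  ext ⟨x, z⟩
  refine and_left_comm.trans (and_congr_right fun _ ↦ and_congr_right fun hz ↦ ?_)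
  rw [Real.sq_sqrt (hg z hz)]

theorem conv_H_general [AddCommGroup F] [Module ℝ F] (C : PointedCone ℝ E)
    (p : Seminorm ℝ E) (ℓ : E →ₗ[ℝ] ℝ) {S : Set F} {g : F → ℝ} (hg : ∀ z ∈ S, 0 ≤ g z) :
    convexHull ℝ {w : E × F | w.1 ∈ C ∧ w.2 ∈ S ∧ √(g w.2 + p w.1 ^ 2) ≤ ℓ w.1} =
      {w | w.1 ∈ C ∧ w.2 ∈ convexHull ℝ S ∧
        ∃ y, 0 ≤ y ∧ (y, w.2) ∈ convexHull ℝ (epigraphOn S fun z ↦ √(g z)) ∧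
          √(y ^ 2 + p w.1 ^ 2) ≤ ℓ w.1} := by
  have hf : ∀ z ∈ S, 0 ≤ √(g z) := fun z _ ↦ Real.sqrt_nonneg (g z)
  rw [← conicLift_secondOrderCone_sqrt C p ℓ hg,
    convexHull_conicLift mem_secondOrderCone_of_le hf]
  ext ⟨x, z⟩
  constructor
  · rintro ⟨y, hz, hxC, hxy⟩
    exact ⟨hxC, snd_mem_convexHull_of_mem_convexHull_epigraphOn hz, y,
      fst_nonneg_of_mem_convexHull_epigraphOn hf hz, hz, hxy⟩
  · rintro ⟨hxC, -, y, -, hz, hxy⟩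
    exact ⟨y, hz, hxC, hxy⟩

end SecondOrderCone

section Coordinates

variable {ι : Type*}

theorem convexHull_setOf_forall_eq_zero_or_eq_one [Finite ι] :
    convexHull ℝ {z : ι → ℝ | ∀ i, z i = 0 ∨ z i = 1} = {z | ∀ i, z i ∈ Set.Icc (0 : ℝ) 1} := by
  have hpi : {z : ι → ℝ | ∀ i, z i = 0 ∨ z i = 1} = Set.univ.pi fun _ ↦ {0, 1} := by
    ext z; simp
  rw [hpi, convexHull_pi]
  ext z
  simp only [convexHull_pair, segment_eq_Icc zero_le_one, Set.mem_univ_pi, Set.mem_ofPred_eq]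

/-- The weighted `ℓ²` seminorm `x ↦ √(∑ i, d i * x i ^ 2)`, for weights `d ≥ 0`. Each coordinate is
scaled by `√(d i)`, so a negative weight counts as `0`. -/
noncomputable def weightedL2Seminorm [Fintype ι] (d : ι → ℝ) : Seminorm ℝ (ι → ℝ) :=
  (normSeminorm ℝ (EuclideanSpace ℝ ι)).comp
    ((WithLp.linearEquiv 2 ℝ (ι → ℝ)).symm.toLinearMap ∘ₗ
      LinearMap.pi fun i ↦ √(d i) • LinearMap.proj i)

theorem weightedL2Seminorm_sq [Fintype ι] {d : ι → ℝ} (hd : ∀ i, 0 ≤ d i) (x : ι → ℝ) :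
    weightedL2Seminorm d x ^ 2 = ∑ i, d i * x i ^ 2 := by
  simp [weightedL2Seminorm, EuclideanSpace.norm_sq_eq, mul_pow, Real.sq_sqrt (hd _)]

end Coordinates

/-- Proposition 5 of Atamtürk–Gómez: convex hull of the set `H`. The continuous vector
lives in `ℝ^{m+1}` (so `m` here plays the role of `m−1` in the paper), with
`x_m = x (Fin.last m)` the last coordinate and `d ∈ ℝ^m_+`. -/
theorem conv_H (n m : ℕ) (σ : ℝ) (c : Fin n → ℝ) (d : Fin m → ℝ)
    (hd : ∀ j, 0 ≤ d j)
    (hσc : ∀ z : Fin n → ℝ, (∀ i, z i = 0 ∨ z i = 1) → 0 ≤ σ + ∑ i, c i * z i) :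
    convexHull ℝ {w : (Fin (m+1) → ℝ) × (Fin n → ℝ) |
      (∀ j, 0 ≤ w.1 j) ∧ (∀ i, w.2 i = 0 ∨ w.2 i = 1) ∧
      Real.sqrt (σ + ∑ i, c i * w.2 i + ∑ j : Fin m, d j * (w.1 j.castSucc)^2)
        ≤ w.1 (Fin.last m)}
    = {w : (Fin (m+1) → ℝ) × (Fin n → ℝ) |
      (∀ j, 0 ≤ w.1 j) ∧ (∀ i, w.2 i ∈ Set.Icc (0:ℝ) 1) ∧
      ∃ y : ℝ, 0 ≤ y ∧
        (y, w.2) ∈ convexHull ℝ {yz : ℝ × (Fin n → ℝ) |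
          (∀ i, yz.2 i = 0 ∨ yz.2 i = 1) ∧
          Real.sqrt (σ + ∑ i, c i * yz.2 i) ≤ yz.1} ∧
        Real.sqrt (y^2 + ∑ j : Fin m, d j * (w.1 j.castSucc)^2) ≤ w.1 (Fin.last m)} := by
  simpa [convexHull_setOf_forall_eq_zero_or_eq_one, weightedL2Seminorm_sq hd, epigraphOn, Pi.le_def,
    LinearMap.funLeft_apply] using
    conv_H_general (PointedCone.positive ℝ (Fin (m + 1) → ℝ))
      ((weightedL2Seminorm d).comp (LinearMap.funLeft ℝ ℝ Fin.castSucc))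
      (LinearMap.proj (Fin.last m)) (S := {z : Fin n → ℝ | ∀ i, z i = 0 ∨ z i = 1}) hσc
end
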